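/- arXiv:1002.2477 — 12 statements merged into one kernel-verified Lean document; each statement's English description precedes it below -/
import Mathlib

section
/- Let R : [0,1] → ℝ be a concave function with R(1) ≥ 0. Suppose q* ∈ (0,1) is a maximizer of R over [0,1] with R(q*) > 0, and suppose q ∈ [q*,1] satisfies R(q) = q·R(q*). Then q ≥ 1/2. -/
/-!
Concavity puts `R` above its chord from `qstar` to `1`. Since `R 1 ≥ 0`, this gives
`q * R qstar = R q ≥ (1 - q) / (1 - qstar) * R qstar`. Dividing by `R qstar > 0` yields
`q ≥ (1 - q) / (1 - qstar) ≥ 1 - q`, so `q ≥ 1 / 2`.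
-/

/-- Let `R : [0,1] → ℝ` be a concave function with `R 1 ≥ 0`. Suppose
`q* ∈ (0,1)` is a maximizer of `R` over `[0,1]` with `R q* > 0`, and suppose
`q ∈ [q*,1]` satisfies `R q = q · R q*`. Then `q ≥ 1/2`. -/
theorem stmt_0 (R : ℝ → ℝ) (hconc : ConcaveOn ℝ (Set.Icc 0 1) R)
    (hR1 : 0 ≤ R 1) (qstar : ℝ) (hqstar : qstar ∈ Set.Ioo (0 : ℝ) 1)
    (hmax : ∀ x ∈ Set.Icc (0 : ℝ) 1, R x ≤ R qstar) (hpos : 0 < R qstar)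
    (q : ℝ) (hq : q ∈ Set.Icc qstar 1) (heq : R q = q * R qstar) :
    q ≥ 1 / 2 := by
  obtain ⟨hs0, hs1⟩ := hqstar
  obtain ⟨hsq, hq1⟩ := hq
  have hd : 0 < 1 - qstar := by linarith
  -- The weights exhibit `q` as a convex combination of `qstar` and `1`.
  have ha : 0 ≤ (1 - q) / (1 - qstar) := div_nonneg (by linarith) hd.le
  have hb0 : 0 ≤ (q - qstar) / (1 - qstar) := div_nonneg (by linarith) hd.le
  have hsum : (1 - q) / (1 - qstar) + (q - qstar) / (1 - qstar) = 1 := by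
    field_simp
    ring
  have hchord := hconc.2 (Set.mem_Icc.2 ⟨hs0.le, hs1.le⟩) (Set.right_mem_Icc.2 zero_le_one)
    ha hb0 hsum
  have hcomb : (1 - q) / (1 - qstar) * qstar + (q - qstar) / (1 - qstar) * 1 = q := by
    field_simp
    ring
  simp only [smul_eq_mul] at hchord
  rw [hcomb, heq] at hchord
  have hb : 0 ≤ (q - qstar) / (1 - qstar) * R 1 :=
    mul_nonneg hb0 hR1
  have hle : (1 - q) / (1 - qstar) ≤ q :=
    le_of_mul_le_mul_right (by linarith) hpos
  have hge : 1 - q ≤ (1 - q) / (1 - qstar) :=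
    le_div_self (by linarith) hd (by linarith)
  linarith
end

section
/- Let F : ℝ → ℝ be the CDF of a distribution supported on [0,∞): F is continuous and strictly increasing on its support, F(x) = 0 for x ≤ 0, and F(x) → 1 as x → ∞. Suppose F is regular, i.e., the revenue function R(q) = q·F⁻¹(1−q) is concave on (0,1], where F⁻¹(y) = inf{v ≥ 0 : F(v) ≥ y}. Let p* > 0 be a maximizer of p·(1−F(p)) over p ≥ 0 with p*(1−F(p*)) > 0, and let q* = 1−F(p*). Then 1 − F(p*·q*) ≥ 1/2. -/
/-!
The revenue curve satisfies `R(q*) = p* q*` and `R(1) = 0`. Put `p = p* q* ≤ p*` and `q = 1 - F p`,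
so that `q* ≤ q ≤ 1` and `R(q) = q p* q*`. Concavity of `R` between `q*` and `1` gives
`q p* q* ≥ ((1 - q) / (1 - q*)) p* q*`, hence `q ≥ (1 - q) / (1 - q*) ≥ 1 - q`, i.e. `q ≥ 1/2`.
-/

open Set

/-- The quantile function `F⁻¹(y) = inf {v ≥ 0 : F v ≥ y}`. -/
noncomputable def quantile (F : ℝ → ℝ) (y : ℝ) : ℝ := sInf {v : ℝ | 0 ≤ v ∧ y ≤ F v}

/-- `F` is the CDF of a distribution supported on `[0,∞)`: continuous, strictly
increasing on `[0,∞)`, zero on `(-∞,0]`, and tending to `1` at `∞`. -/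
structure IsCDFOnNonneg (F : ℝ → ℝ) : Prop where
  cont : Continuous F
  strictMono : StrictMonoOn F (Ici 0)
  zero_of_nonpos : ∀ x ≤ 0, F x = 0
  tendsto_one : Filter.Tendsto F Filter.atTop (nhds 1)

/-- `F` is regular: the revenue function `R(q) = q · F⁻¹(1-q)` is concave on `(0,1]`. -/
def IsRegularCDF (F : ℝ → ℝ) : Prop :=
  ConcaveOn ℝ (Ioc 0 1) (fun q => q * quantile F (1 - q))

theorem quantile_apply (F : ℝ → ℝ) (hF : IsCDFOnNonneg F) {v : ℝ} (hv : 0 ≤ v) :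
    quantile F (F v) = v := by
  have h : {w : ℝ | 0 ≤ w ∧ F v ≤ F w} = Ici v := by
    ext w
    constructor
    · rintro ⟨hw, h⟩
      exact (hF.strictMono.le_iff_le hv hw).1 h
    · intro h
      have hw : 0 ≤ w := le_trans hv h
      exact ⟨hw, (hF.strictMono.le_iff_le hv hw).2 h⟩
  rw [quantile, h, csInf_Ici]

/-- if `p* > 0` maximizes `p·(1-F p)` over `p ≥ 0` with positive optimal
value, and `q* = 1 - F p*`, then `1 - F (p*·q*) ≥ 1/2`. -/
theorem stmt_1 (F : ℝ → ℝ) (hF : IsCDFOnNonneg F) (hreg : IsRegularCDF F)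
    (pstar : ℝ) (hpstar : 0 < pstar)
    (hmax : ∀ p : ℝ, 0 ≤ p → p * (1 - F p) ≤ pstar * (1 - F pstar))
    (hpos : 0 < pstar * (1 - F pstar)) (qstar : ℝ) (hq : qstar = 1 - F pstar) :
    1 - F (pstar * qstar) ≥ 1 / 2 := by
  have hF0 : F 0 = 0 := hF.zero_of_nonpos 0 le_rfl
  have hq0 : 0 < qstar := hq ▸ pos_of_mul_pos_right hpos hpstar.le
  have hq1 : qstar < 1 := by
    have := hF.strictMono self_mem_Ici hpstar.le hpstar
    linarith
  have hp0 : 0 < pstar * qstar := mul_pos hpstar hq0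
  have hFp0 : 0 < F (pstar * qstar) := by
    have := hF.strictMono self_mem_Ici hp0.le hp0
    linarith
  have hFp : F (pstar * qstar) ≤ F pstar :=
    (hF.strictMono.le_iff_le hp0.le hpstar.le).2 (by nlinarith)
  obtain ⟨q, hqdef⟩ : ∃ q, q = 1 - F (pstar * qstar) := ⟨_, rfl⟩
  have hd : 0 < 1 - qstar := by linarith
  -- `q` is the convex combination of `q*` and `1` with these weights.
  have ha : 0 ≤ (1 - q) / (1 - qstar) := div_nonneg (by linarith) hd.le
  have hb : 0 ≤ (q - qstar) / (1 - qstar) := div_nonneg (by linarith) hd.le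
  have hab : (1 - q) / (1 - qstar) + (q - qstar) / (1 - qstar) = 1 := by
    field_simp; ring
  have hqmem : qstar ∈ Ioc (0 : ℝ) 1 := ⟨hq0, hq1.le⟩
  have h1mem : (1 : ℝ) ∈ Ioc (0 : ℝ) 1 := ⟨one_pos, le_rfl⟩
  obtain ⟨-, hconc⟩ := hreg
  have hc := hconc hqmem h1mem ha hb hab
  have hcomb : (1 - q) / (1 - qstar) * qstar + (q - qstar) / (1 - qstar) * 1 = q := by
    field_simp; ring
  have e1 : quantile F (1 - qstar) = pstar := by
    rw [hq, sub_sub_cancel, quantile_apply F hF hpstar.le]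
  have e2 : quantile F (1 - 1) = 0 := by
    simpa [hF0] using quantile_apply F hF (le_refl (0 : ℝ))
  have e3 : quantile F (1 - q) = pstar * qstar := by
    rw [hqdef, sub_sub_cancel, quantile_apply F hF hp0.le]
  simp only [smul_eq_mul, hcomb, e1, e2, e3, mul_zero, add_zero] at hc
  have h1 : (1 - q) / (1 - qstar) ≤ q := by
    refine le_of_mul_le_mul_right ?_ hp0
    linarith
  rw [div_le_iff₀ hd] at h1
  rw [← hqdef]
  nlinarith
end

section
/- Let H : [0,∞) → [0,∞) be a nondecreasing, convex, differentiable function with H(0) = 0 and H(x) → ∞ as x → ∞, and define the CDF F(x) = 1 − e^{−H(x)} for x ≥ 0 (and F(x)=0 for x < 0). Let p* > 0 be a maximizer of p·(1−F(p)) = p·e^{−H(p)} over p ≥ 0, and let q* = 1−F(p*) = e^{−H(p*)}. Then 1 − F(p*·q*) ≥ e^{−1/e}. -/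
/-!
Write `t = H p*`, so that `q* = e^{-t}` lies in `(0, 1]`. Since `p* q*` is the convex combination
`q* • p* + (1 - q*) • 0` and `H 0 = 0`, convexity gives `H (p* q*) ≤ q* H (p*) = t e^{-t}`,
and `t e^{-t} ≤ 1 / e` for every real `t`.
-/

open Set Real

/-- `H : [0,∞) → [0,∞)` nondecreasing, convex, differentiable,
`H 0 = 0`, `H x → ∞`; `F x = 1 - e^{-H x}` for `x ≥ 0` (and `F x = 0` for `x < 0`).
If `p* > 0` maximizes `p·(1 - F p) = p·e^{-H p}` over `p ≥ 0` and
`q* = 1 - F p* = e^{-H p*}`, then `1 - F (p*·q*) ≥ e^{-1/e}`. -/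
theorem stmt_2 (H : ℝ → ℝ) (hmono : MonotoneOn H (Ici 0))
    (hconv : ConvexOn ℝ (Ici 0) H) (hdiff : DifferentiableOn ℝ H (Ici 0))
    (hnonneg : ∀ x ∈ Ici (0 : ℝ), 0 ≤ H x) (h0 : H 0 = 0)
    (htop : Filter.Tendsto H Filter.atTop Filter.atTop)
    (F : ℝ → ℝ) (hF : ∀ x ≥ (0 : ℝ), F x = 1 - exp (-H x))
    (hF' : ∀ x < (0 : ℝ), F x = 0)
    (pstar : ℝ) (hpstar : 0 < pstar)
    (hmax : ∀ p : ℝ, 0 ≤ p → p * (1 - F p) ≤ pstar * (1 - F pstar))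
    (qstar : ℝ) (hq : qstar = 1 - F pstar) :
    1 - F (pstar * qstar) ≥ exp (-(1 / exp 1)) := by
  have hp0 : (0 : ℝ) ≤ pstar := hpstar.le
  have hq' : qstar = exp (-H pstar) := by rw [hq, hF pstar hp0]; ring
  have hqpos : 0 < qstar := hq' ▸ exp_pos _
  have hq1 : qstar ≤ 1 := by
    rw [hq', exp_le_one_iff]
    linarith [hnonneg pstar hp0]
  -- Convexity together with `H 0 = 0` gives `H (p* q*) ≤ q* H (p*)`.
  have hc : H (pstar * qstar) ≤ qstar * H pstar := by
    have h := hconv.2 (mem_Ici.2 hp0) (mem_Ici.2 le_rfl) hqpos.le (sub_nonneg.2 hq1)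
      (by ring : qstar + (1 - qstar) = 1)
    simpa [h0, mul_comm] using h
  -- The function `t ↦ t e^{-t}` is at most `1 / e`, since `t ≤ e^{t - 1}`.
  have ht : qstar * H pstar ≤ 1 / exp 1 := by
    have h1 : H pstar ≤ exp (H pstar - 1) := by
      linarith [add_one_le_exp (H pstar - 1)]
    calc qstar * H pstar ≤ exp (-H pstar) * exp (H pstar - 1) := by
          rw [hq']; gcongr
      _ = 1 / exp 1 := by
          rw [← exp_add, one_div, ← exp_neg]; congr 1; ring
  rw [hF _ (mul_nonneg hp0 hqpos.le), sub_sub_cancel, ge_iff_le, exp_le_exp]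
  linarith
end

section
/- Let H : [0,∞) → ℝ be a nondecreasing convex function with H(0) = 0 and H(1) ≤ 1. Then H(e^{−H(1)}) ≤ 1/e. -/
open Set Real

/-- Let `H : [0,∞) → ℝ` be nondecreasing and convex with `H 0 = 0`
and `H 1 ≤ 1`. Then `H (e^{-H 1}) ≤ 1/e`. -/
theorem stmt_3 (H : ℝ → ℝ) (hmono : MonotoneOn H (Ici 0))
    (hconv : ConvexOn ℝ (Ici 0) H) (h0 : H 0 = 0) (h1 : H 1 ≤ 1) :
    H (exp (-H 1)) ≤ 1 / exp 1 := by
  have hc : 0 ≤ H 1 := h0 ▸ hmono (mem_Ici.2 le_rfl) (mem_Ici.2 zero_le_one) zero_le_one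
  have ht : exp (-H 1) ≤ 1 := exp_le_one_iff.2 (by linarith)
  -- Convexity on the chord from `(0, 0)` to `(1, H 1)`, at the point `t = e^{-H 1} ∈ [0, 1]`.
  have hchord : H (exp (-H 1)) ≤ exp (-H 1) * H 1 := by
    have h := hconv.2 (mem_Ici.2 zero_le_one) (mem_Ici.2 (le_refl (0 : ℝ)))
      (exp_pos (-H 1)).le (sub_nonneg.2 ht) (by ring)
    simpa [h0] using h
  -- The function `c ↦ c e^{-c}` is maximal at `c = 1`, because `c ≤ e^{c - 1}`.
  calc H (exp (-H 1)) ≤ exp (-H 1) * H 1 := hchord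
    _ ≤ exp (-H 1) * exp (H 1 - 1) := by
        gcongr
        linarith [add_one_le_exp (H 1 - 1)]
    _ = 1 / exp 1 := by
        rw [← exp_add, one_div, ← exp_neg]
        ring_nf
end

section
/- Let (Ω, P) be a probability space, let M > 0 be a real number, and let S : Ω → ℝ be an integrable random variable with 0 ≤ S ≤ M almost surely. Let u : ℝ → ℝ be a nondecreasing concave function with u(0) = 0. Then E[u(S)] ≥ (E[S]/M)·u(M). -/
/-!
By concavity, `u` lies above its chord from `(0, 0)` to `(M, u M)`, so `(S / M) * u M ≤ u S` almost
surely; the inequality follows by integrating. Monotonicity of `u` makes `u ∘ S` measurable and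
bounded, hence integrable.
-/

open MeasureTheory

/-- Let `(Ω, P)` be a probability space, `M > 0`, and `S` an integrable
random variable with `0 ≤ S ≤ M` a.s. Let `u` be a nondecreasing concave function with
`u 0 = 0`. Then `E[u(S)] ≥ (E[S]/M) · u M`. -/
theorem stmt_4 {Ω : Type*} [MeasurableSpace Ω] (P : Measure Ω) [IsProbabilityMeasure P]
    (M : ℝ) (hM : 0 < M) (S : Ω → ℝ) (hS : Integrable S P)
    (hbound : ∀ᵐ ω ∂P, 0 ≤ S ω ∧ S ω ≤ M)
    (u : ℝ → ℝ) (humono : Monotone u) (huconc : ConcaveOn ℝ Set.univ u)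
    (hu0 : u 0 = 0) :
    ∫ ω, u (S ω) ∂P ≥ (∫ ω, S ω ∂P) / M * u M := by
  -- The left-hand side is a genuine expectation: `u ∘ S` is measurable and lies in `[0, u M]` a.s.
  have hint : Integrable (fun ω => u (S ω)) P := by
    refine Integrable.of_mem_Icc 0 (u M)
      (humono.measurable.comp_aemeasurable hS.aestronglyMeasurable.aemeasurable) ?_
    filter_upwards [hbound] with ω hω
    exact ⟨hu0 ▸ humono hω.1, humono hω.2⟩
  have hchord : ∀ᵐ ω ∂P, S ω / M * u M ≤ u (S ω) := by
    filter_upwards [hbound] with ω hω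
    -- Concavity with weights `1 - S ω / M` at `0` and `S ω / M` at `M`.
    have h := huconc.2 (Set.mem_univ 0) (Set.mem_univ M)
      (sub_nonneg.2 ((div_le_one hM).2 hω.2)) (div_nonneg hω.1 hM.le)
      (sub_add_cancel 1 (S ω / M))
    simpa [hu0, hM.ne'] using h
  calc (∫ ω, S ω ∂P) / M * u M = ∫ ω, S ω / M * u M ∂P := by
        rw [integral_mul_const, integral_div]
    _ ≤ ∫ ω, u (S ω) ∂P :=
        integral_mono_ae ((hS.div_const M).mul_const (u M)) hint hchord
end

section
/- Let k be a positive integer, let n be a positive integer, let q ∈ [0,1] with q·n ≥ k/2, and let Y be a binomial random variable with parameters n and q. Then E[min(Y, q·n)] ≥ (1/4)·q·n, where the minimum is taken in the reals. -/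
/-!
Write `μ = q n ≥ 1/2`. Since `min(y, μ) = (y + μ - |y - μ|) / 2`, and
`|y - μ| ≤ ((y - μ)² / μ + μ) / 2` by AM-GM, taking expectations and using
`E Y = μ` and `Var Y = μ (1 - q) ≤ μ` gives
`E[min(Y, μ)] ≥ μ - (1 + μ) / 4`, which is at least `μ / 4` exactly when `μ ≥ 1/2`.
The mean and variance come from the corresponding identities for Bernstein polynomials.
-/

open Finset

/-- AM-GM for `|y - μ|`, written as a quadratic minorant of the capped variable. -/
lemma min_ge_quadratic (y μ : ℝ) (hμ : 0 < μ) :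
    (y + μ) / 2 - (μ - y) ^ 2 / (4 * μ) - μ / 4 ≤ min y μ := by
  have key : |μ - y| ≤ (μ - y) ^ 2 / (2 * μ) + μ / 2 := by
    have h : (μ - y) ^ 2 / (2 * μ) + μ / 2 - |μ - y| = (|μ - y| - μ) ^ 2 / (2 * μ) := by
      rw [← sq_abs (μ - y)]
      field_simp
      ring
    have : 0 ≤ (|μ - y| - μ) ^ 2 / (2 * μ) := by positivity
    linarith
  have e : (μ - y) ^ 2 / (4 * μ) = (μ - y) ^ 2 / (2 * μ) / 2 := by
    field_simp
    norm_num
  rw [e]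
  obtain ⟨h₁, h₂⟩ := abs_le.mp (le_refl |μ - y|)
  apply le_min <;> linarith

/-- Let `k, n` be positive integers and `q ∈ [0,1]` with `q·n ≥ k/2`.
For `Y ~ Binomial(n,q)`, we have `E[min(Y, q·n)] ≥ (1/4)·q·n`; the expectation is
written out against the binomial distribution. -/
theorem stmt_6 (k n : ℕ) (hk : 0 < k) (hn : 0 < n) (q : ℝ)
    (hq : q ∈ Set.Icc (0 : ℝ) 1) (hqn : q * n ≥ k / 2) :
    ∑ j ∈ range (n + 1),
        (n.choose j : ℝ) * q ^ j * (1 - q) ^ (n - j) * min (j : ℝ) (q * n)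
      ≥ (1 / 4) * (q * n) := by
  obtain ⟨hq0, hq1⟩ := hq
  have hk1 : (1 : ℝ) ≤ k := by exact_mod_cast hk
  have hμ : 1 / 2 ≤ q * n := by linarith
  set w : ℕ → ℝ := fun j => (n.choose j : ℝ) * q ^ j * (1 - q) ^ (n - j) with hw
  have w0 : ∀ j, 0 ≤ w j := fun j => by
    have : 0 ≤ 1 - q := by linarith
    positivity
  have m0 : ∑ j ∈ range (n + 1), w j = 1 := by
    have := congrArg (Polynomial.eval q) (bernsteinPolynomial.sum ℝ n)
    simpa [bernsteinPolynomial, Polynomial.eval_finsetSum] using this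
  have m1 : ∑ j ∈ range (n + 1), w j * j = q * n := by
    have := congrArg (Polynomial.eval q) (bernsteinPolynomial.sum_smul ℝ n)
    simpa [bernsteinPolynomial, Polynomial.eval_finsetSum, mul_comm, hw] using this
  have m2 : ∑ j ∈ range (n + 1), w j * (q * n - j) ^ 2 = q * n * (1 - q) := by
    have := congrArg (Polynomial.eval q) (bernsteinPolynomial.variance ℝ n)
    simpa [bernsteinPolynomial, Polynomial.eval_finsetSum, mul_comm, hw] using this
  set μ : ℝ := q * n with hμdef
  have hpos : 0 < μ := by linarith
  have hlow : ∑ j ∈ range (n + 1), w j * ((j + μ) / 2 - (μ - j) ^ 2 / (4 * μ) - μ / 4)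
      ≤ ∑ j ∈ range (n + 1), w j * min (j : ℝ) μ :=
    sum_le_sum fun j _ => mul_le_mul_of_nonneg_left (min_ge_quadratic j μ hpos) (w0 j)
  have heval : ∑ j ∈ range (n + 1), w j * ((j + μ) / 2 - (μ - j) ^ 2 / (4 * μ) - μ / 4)
      = μ / 2 + μ / 4 - (1 - q) / 4 := by
    have : ∀ j ∈ range (n + 1), w j * ((j + μ) / 2 - (μ - j) ^ 2 / (4 * μ) - μ / 4)
        = 1 / 2 * (w j * j) - 1 / (4 * μ) * (w j * (μ - j) ^ 2) + μ / 4 * w j :=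
      fun j _ => by ring
    rw [sum_congr rfl this, sum_add_distrib, sum_sub_distrib, ← mul_sum, ← mul_sum, ← mul_sum,
      m0, m1, m2]
    field_simp
    ring
  rw [heval] at hlow
  change 1 / 4 * μ ≤ ∑ j ∈ range (n + 1), w j * min (j : ℝ) μ
  linarith
end

section
/- Let n ≥ k ≥ 1 be integers, let s ∈ [1/2, 1], and let X be a binomial random variable with parameters n and s. Then k/2 ≤ E[min(k, X)] ≤ k. -/
/-!
Every value `j ≤ n` of `X` satisfies `(k / n) * j ≤ min k j ≤ k`: the lower bound holds because both
`k / n` and `j / n` are at most `1`. Taking expectations and using `E[X] = n * s` gives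
`k * s ≤ E[min(k, X)] ≤ k`, and `s ≥ 1 / 2` finishes. The total mass and the mean of the binomial
distribution are the identities `bernsteinPolynomial.sum` and `bernsteinPolynomial.sum_smul`
evaluated at `s`.
-/

open Finset

lemma binomial_weights_sum (n : ℕ) (s : ℝ) :
    ∑ j ∈ range (n + 1), (n.choose j : ℝ) * s ^ j * (1 - s) ^ (n - j) = 1 := by
  have h := congrArg (Polynomial.eval s) (bernsteinPolynomial.sum ℝ n)
  simpa [Polynomial.eval_finsetSum, bernsteinPolynomial] using h

lemma binomial_weights_mean (n : ℕ) (s : ℝ) :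
    ∑ j ∈ range (n + 1), (n.choose j : ℝ) * s ^ j * (1 - s) ^ (n - j) * (j : ℝ) = n * s := by
  have h := congrArg (Polynomial.eval s) (bernsteinPolynomial.sum_smul ℝ n)
  simpa [Polynomial.eval_finsetSum, bernsteinPolynomial, mul_comm] using h

/-- Let `n ≥ k ≥ 1` be integers, `s ∈ [1/2,1]`, and `X ~ Binomial(n,s)`.
Then `k/2 ≤ E[min(k, X)] ≤ k`; the expectation is written out against the binomial
distribution. -/
theorem stmt_8 (n k : ℕ) (hk : 1 ≤ k) (hkn : k ≤ n) (s : ℝ)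
    (hs : s ∈ Set.Icc (1 / 2 : ℝ) 1) :
    (k : ℝ) / 2 ≤
        ∑ j ∈ range (n + 1),
          (n.choose j : ℝ) * s ^ j * (1 - s) ^ (n - j) * min (k : ℝ) (j : ℝ) ∧
      ∑ j ∈ range (n + 1),
          (n.choose j : ℝ) * s ^ j * (1 - s) ^ (n - j) * min (k : ℝ) (j : ℝ) ≤ k := by
  obtain ⟨hs1, hs2⟩ := hs
  have hw (j : ℕ) : 0 ≤ (n.choose j : ℝ) * s ^ j * (1 - s) ^ (n - j) :=
    mul_nonneg (mul_nonneg (by positivity) (pow_nonneg (by linarith) _))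
      (pow_nonneg (by linarith) _)
  have hn : (0 : ℝ) < n := by exact_mod_cast (by omega : 0 < n)
  have hkn' : (k : ℝ) ≤ n := by exact_mod_cast hkn
  constructor
  · calc (k : ℝ) / 2 ≤ k * s := by nlinarith [(Nat.cast_nonneg k : (0 : ℝ) ≤ k)]
      _ = k / n * (n * s) := by field_simp
      _ = ∑ j ∈ range (n + 1),
            (n.choose j : ℝ) * s ^ j * (1 - s) ^ (n - j) * (k / n * j) := by
          rw [← binomial_weights_mean, mul_sum]
          exact sum_congr rfl fun j _ => by ring
      _ ≤ _ := by
          refine sum_le_sum fun j hj => mul_le_mul_of_nonneg_left (le_min ?_ ?_) (hw j)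
          · have hjn : (j : ℝ) ≤ n := by
              exact_mod_cast Nat.lt_succ_iff.mp (mem_range.mp hj)
            rw [div_mul_eq_mul_div, div_le_iff₀ hn]
            gcongr
          · exact mul_le_of_le_one_left (Nat.cast_nonneg j) ((div_le_one hn).mpr hkn')
  · calc _ ≤ ∑ j ∈ range (n + 1), (n.choose j : ℝ) * s ^ j * (1 - s) ^ (n - j) * (k : ℝ) :=
          sum_le_sum fun j _ => mul_le_mul_of_nonneg_left (min_le_left _ _) (hw j)
      _ = k := by rw [← sum_mul, binomial_weights_sum, one_mul]
end

section
/- Let n ≥ 1 and 0 ≤ k < n be integers, let r₁, …, rₙ ≥ 0 be nonnegative reals, and let u : ℝ → ℝ be a nondecreasing concave function with u(0) = 0. Then the average of u(Σ_{i∈S} r_i) over all subsets S ⊆ {1,…,n} of size n−k satisfies: (1 / C(n, n−k)) · Σ_{S : |S|=n−k} u(Σ_{i∈S} r_i) ≥ (1 − k/n) · u(r₁ + ⋯ + rₙ), where C(n, n−k) is the binomial coefficient. -/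
open Finset

/-!
Concavity with `u 0 = 0` puts `u` above its chord on `[0, R]`, where `R = ∑ i, r i`: each subset sum
`x_S ∈ [0, R]` satisfies `x_S / R * u R ≤ u x_S` (`chord_le`). Averaging over all `S` of size `m`
leaves the average of `x_S` to compute. By double counting (`sum_powersetCard_sum`) each index lies
in `(n - 1).choose (m - 1)` of the sets, so the average is `m / n * R`, because
`n * (n - 1).choose (m - 1) = m * n.choose m`.
-/

/-- A concave function vanishing at `0` lies above its chord on `[0, R]`. For `R = 0` the bound
reads `0 ≤ u 0`, as `x / 0 = 0`. -/
lemma chord_le {u : ℝ → ℝ} (huconc : ConcaveOn ℝ Set.univ u) (hu0 : u 0 = 0)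
    {x R : ℝ} (hx : 0 ≤ x) (hxR : x ≤ R) : x / R * u R ≤ u x := by
  rcases (hx.trans hxR).eq_or_lt with hR | hR
  · subst hR
    obtain rfl : x = 0 := le_antisymm hxR hx
    simp [hu0]
  · have h := huconc.2 (Set.mem_univ R) (Set.mem_univ 0) (div_nonneg hx hR.le)
      (sub_nonneg.2 ((div_le_one hR).2 hxR)) (add_sub_cancel _ _)
    simpa [hu0, div_mul_cancel₀ x hR.ne'] using h

/-- Double counting: each index lies in `(n - 1).choose (m - 1)` of the subsets of size `m`. -/
lemma sum_powersetCard_sum {n m : ℕ} (hm : 1 ≤ m) (r : Fin n → ℝ) :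
    ∑ S ∈ powersetCard m (univ : Finset (Fin n)), ∑ i ∈ S, r i
      = ((n - 1).choose (m - 1) : ℝ) * ∑ i, r i := by
  have hcard (i : Fin n) :
      #{S ∈ powersetCard m (univ : Finset (Fin n)) | i ∈ S} = (n - 1).choose (m - 1) := by
    simpa using card_filter_powersetCard_subset {i} (univ : Finset (Fin n)) m (by simp) (by simpa)
  rw [sum_comm' (t' := univ) (s' := fun i => {S ∈ powersetCard m (univ : Finset (Fin n)) | i ∈ S})
    (by simp), mul_sum]
  simp [hcard]

/-- Let `n ≥ 1`, `0 ≤ k < n`, `r₁,…,rₙ ≥ 0`, and `u` a nondecreasing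
concave function with `u 0 = 0`. Then the average of `u (∑_{i∈S} rᵢ)` over all subsets
`S` of size `n-k` is at least `(1 - k/n) · u (r₁ + ⋯ + rₙ)`. -/
theorem stmt_9 (n k : ℕ) (hn : 1 ≤ n) (hk : k < n) (r : Fin n → ℝ)
    (hr : ∀ i, 0 ≤ r i)
    (u : ℝ → ℝ) (humono : Monotone u) (huconc : ConcaveOn ℝ Set.univ u)
    (hu0 : u 0 = 0) :
    (1 / (n.choose (n - k) : ℝ)) *
        ∑ S ∈ powersetCard (n - k) (univ : Finset (Fin n)), u (∑ i ∈ S, r i)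
      ≥ (1 - (k : ℝ) / n) * u (∑ i, r i) := by
  obtain ⟨p, hp⟩ : ∃ p, n - k = p + 1 := ⟨n - k - 1, by omega⟩
  obtain ⟨N, rfl⟩ : ∃ N, n = N + 1 := ⟨n - 1, by omega⟩
  rw [hp]
  set R := ∑ i, r i with hR
  have hchord : ∑ S ∈ powersetCard (p + 1) (univ : Finset (Fin (N + 1))), (∑ i ∈ S, r i) / R * u R
      ≤ ∑ S ∈ powersetCard (p + 1) (univ : Finset (Fin (N + 1))), u (∑ i ∈ S, r i) :=
    sum_le_sum fun S _ => chord_le huconc hu0 (sum_nonneg fun i _ => hr i)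
      (sum_le_sum_of_subset_of_nonneg (subset_univ S) fun i _ _ => hr i)
  rw [← sum_mul, ← sum_div, sum_powersetCard_sum (by omega), ← hR] at hchord
  simp only [Nat.add_sub_cancel] at hchord
  -- When `R = 0` the factor `R / R` is not `1`, but then `u R = 0`.
  have hcancel : (N.choose p : ℝ) * R / R * u R = N.choose p * u R := by
    by_cases h : R = 0
    · simp [h, hu0]
    · rw [mul_div_cancel_right₀ _ h]
  rw [hcancel] at hchord
  have hchoose : ((N : ℝ) + 1) * N.choose p = (N + 1).choose (p + 1) * (p + 1) := by
    exact_mod_cast Nat.add_one_mul_choose_eq N p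
  have hpos : (0 : ℝ) < (N + 1).choose (p + 1) := by
    exact_mod_cast Nat.choose_pos (by omega)
  have hk' : (k : ℝ) + (p + 1) = N + 1 := by
    exact_mod_cast (by omega : k + (p + 1) = N + 1)
  have hratio : 1 - (k : ℝ) / ((N + 1 : ℕ) : ℝ)
      = 1 / ((N + 1).choose (p + 1) : ℝ) * N.choose p := by
    have : (N : ℝ) + 1 ≠ 0 := by positivity
    push_cast
    field_simp
    linear_combination (-((N + 1).choose (p + 1) : ℝ)) * hk' - hchoose
  rw [hratio, mul_assoc]
  exact mul_le_mul_of_nonneg_left hchord (by positivity)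
end

section
/- Let n and t be integers with 2 ≤ t ≤ n, and let B be a binomial random variable with parameters n and (t−1)/n. Then P[B ≥ t] ≥ 1/4. -/
open Finset

/-!
Write `k = t - 1`, so that `B ~ Binomial(n, k/n)` has the integer mean `k` with `1 ≤ k < n`, and the
claim is `P[B ≤ k] ≤ 3/4`. The proof follows Hoeffding's idea of averaging success probabilities at
a fixed mean: `P[Bin(n, k/n) ≤ k]` is nonincreasing in `n` (`lower_step`), which reduces the claim
to `n = k + 1`, where `P[B ≥ k + 1] = (1 - 1/(k+1))^(k+1) ≥ 1/4` by Bernoulli's inequality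
(`quarter_le_pow`).

For the monotonicity, interpolate between `Bin(n, k/n)` and `Bin(n+1, k/(n+1))` by
`S = Bin(n, p) + Ber(q)` with `n p + q = k` and `k/(n+1) ≤ p ≤ k/n`. Writing `b` for the binomial
point probabilities, `P[S ≤ k]` has derivative `n (p - q) (b(n-1, p, k-1) - b(n-1, p, k))` in `p`
(`derivative_interp`). Both factors are nonnegative, the second because `n p ≤ k`
(`bernstein_succ_le`).
-/

/-- `P[Bin(n, x) ≤ k]` as a polynomial in `x`. -/
noncomputable def lower (n k : ℕ) : Polynomial ℝ :=
  ∑ j ∈ range (k + 1), bernsteinPolynomial ℝ n j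

/-- `P[Bin(n, x) + Ber(q) ≤ k]` with `q = k - n x`, as a polynomial in `x`. -/
noncomputable def interp (n k : ℕ) : Polynomial ℝ :=
  lower n k - ((k : Polynomial ℝ) - (n : Polynomial ℝ) * Polynomial.X) * bernsteinPolynomial ℝ n k

/-- Conditioning on the last trial. -/
lemma bernstein_succ_succ (n j : ℕ) :
    bernsteinPolynomial ℝ (n + 1) (j + 1) = Polynomial.X * bernsteinPolynomial ℝ n j
      + (1 - Polynomial.X) * bernsteinPolynomial ℝ n (j + 1) := by
  simp only [bernsteinPolynomial, Nat.choose_succ_succ, Nat.add_sub_add_right]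
  rcases lt_or_ge j n with h | h
  · obtain ⟨r, rfl⟩ := Nat.exists_eq_add_of_lt h
    rw [show j + r + 1 - j = r + 1 by omega, show j + r + 1 - (j + 1) = r by omega]
    push_cast
    ring
  · rw [Nat.choose_eq_zero_of_lt (show n < j + 1 by omega)]
    push_cast
    ring

lemma lower_succ_left (n k : ℕ) :
    lower (n + 1) k = lower n k - Polynomial.X * bernsteinPolynomial ℝ n k := by
  induction k with
  | zero => simp [lower, bernsteinPolynomial]; ring
  | succ k ih =>
    have h (m : ℕ) : lower m (k + 1) = lower m k + bernsteinPolynomial ℝ m (k + 1) :=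
      sum_range_succ _ _
    rw [h, h, ih, bernstein_succ_succ]
    ring

lemma derivative_lower (m k : ℕ) :
    Polynomial.derivative (lower (m + 1) k)
      = -((m + 1 : ℕ) : Polynomial ℝ) * bernsteinPolynomial ℝ m k := by
  induction k with
  | zero => simp [lower, bernsteinPolynomial.derivative_zero]
  | succ k ih =>
    have h : lower (m + 1) (k + 1) = lower (m + 1) k + bernsteinPolynomial ℝ (m + 1) (k + 1) :=
      sum_range_succ _ _
    rw [h, Polynomial.derivative_add, ih, bernsteinPolynomial.derivative_succ, Nat.add_sub_cancel]
    ring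

/-- In terms of `n = m + 1`, `k = i + 1` and `q = k - n x`, the derivative is
`n (x - q) (b(n-1, x, k-1) - b(n-1, x, k))`. -/
lemma derivative_interp (m i : ℕ) :
    Polynomial.derivative (interp (m + 1) (i + 1))
      = ((m + 1 : ℕ) : Polynomial ℝ)
        * (Polynomial.X - (((i + 1 : ℕ) : Polynomial ℝ) - ((m + 1 : ℕ) : Polynomial ℝ)
          * Polynomial.X))
        * (bernsteinPolynomial ℝ m i - bernsteinPolynomial ℝ m (i + 1)) := by
  rw [interp, Polynomial.derivative_sub, Polynomial.derivative_mul, derivative_lower,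
    bernsteinPolynomial.derivative_succ, Nat.add_sub_cancel, bernstein_succ_succ,
    Polynomial.derivative_sub, Polynomial.derivative_mul, Polynomial.derivative_natCast,
    Polynomial.derivative_natCast, Polynomial.derivative_X]
  ring

/-- The binomial point probabilities decrease from `i` to `i + 1` when `(m + 1) x ≤ i + 1`. -/
lemma bernstein_succ_le {m i : ℕ} (him : i < m) {x : ℝ} (hx0 : 0 ≤ x) (hx1 : x ≤ 1)
    (hx : (m + 1 : ℝ) * x ≤ i + 1) :
    (bernsteinPolynomial ℝ m (i + 1)).eval x ≤ (bernsteinPolynomial ℝ m i).eval x := by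
  obtain ⟨r, rfl⟩ := Nat.exists_eq_add_of_lt him
  have hc : ((i + r + 1).choose (i + 1) : ℝ) * (i + 1) = (i + r + 1).choose i * (r + 1) := by
    have := Nat.choose_succ_right_eq (i + r + 1) i
    rw [show i + r + 1 - i = r + 1 by omega] at this
    exact_mod_cast this
  simp only [bernsteinPolynomial, Polynomial.eval_mul, Polynomial.eval_natCast,
    Polynomial.eval_pow, Polynomial.eval_X, Polynomial.eval_sub, Polynomial.eval_one]
  rw [show i + r + 1 - i = r + 1 by omega, show i + r + 1 - (i + 1) = r by omega]
  push_cast at hx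
  have hi : (0 : ℝ) < i + 1 := by positivity
  have key : ((i + r + 1).choose (i + 1) : ℝ) * x ≤ (i + r + 1).choose i * (1 - x) := by
    refine le_of_mul_le_mul_right ?_ hi
    calc ((i + r + 1).choose (i + 1) : ℝ) * x * (i + 1)
        = (i + r + 1).choose i * ((r + 1) * x) := by linear_combination x * hc
      _ ≤ (i + r + 1).choose i * ((1 - x) * (i + 1)) :=
          mul_le_mul_of_nonneg_left (by linarith) (by positivity)
      _ = _ := by ring
  have h1 : 0 ≤ x ^ i * (1 - x) ^ r := mul_nonneg (by positivity) (pow_nonneg (by linarith) _)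
  calc _ = ((i + r + 1).choose (i + 1) : ℝ) * x * (x ^ i * (1 - x) ^ r) := by ring
    _ ≤ (i + r + 1).choose i * (1 - x) * (x ^ i * (1 - x) ^ r) := by gcongr
    _ = _ := by ring

/-- `P[Bin(n+1, k/(n+1)) ≤ k] ≤ P[Bin(n, k/n) ≤ k]` for `n = m + 1`, `k = i + 1 < n`. -/
lemma lower_step {m i : ℕ} (him : i < m) :
    (lower (m + 2) (i + 1)).eval ((i + 1 : ℝ) / (m + 2))
      ≤ (lower (m + 1) (i + 1)).eval ((i + 1 : ℝ) / (m + 1)) := by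
  have him' : (i : ℝ) < m := by exact_mod_cast him
  have hm1 : (0 : ℝ) < m + 1 := by positivity
  have hm2 : (0 : ℝ) < m + 2 := by positivity
  have hab : (i + 1 : ℝ) / (m + 2) ≤ (i + 1) / (m + 1) := by
    gcongr
    norm_num
  have hmono : MonotoneOn (fun x => (interp (m + 1) (i + 1)).eval x)
      (Set.Icc ((i + 1 : ℝ) / (m + 2)) ((i + 1) / (m + 1))) := by
    refine monotoneOn_of_deriv_nonneg (convex_Icc _ _) (Polynomial.continuousOn _)
      (Polynomial.differentiableOn _) fun x hx => ?_
    rw [interior_Icc] at hx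
    have hx1 := (div_lt_iff₀ hm2).1 hx.1
    have hx2 := (lt_div_iff₀ hm1).1 hx.2
    have hx0 : 0 ≤ x := le_trans (by positivity) hx.1.le
    have hle : x ≤ 1 := hx.2.le.trans ((div_le_one hm1).2 (by linarith))
    rw [Polynomial.deriv, derivative_interp]
    simp only [Polynomial.eval_mul, Polynomial.eval_natCast, Polynomial.eval_X,
      Polynomial.eval_sub]
    refine mul_nonneg (mul_nonneg (by positivity) ?_)
      (sub_nonneg.2 (bernstein_succ_le him hx0 hle (by linarith)))
    push_cast
    linarith
  have h := hmono (Set.left_mem_Icc.2 hab) (Set.right_mem_Icc.2 hab) hab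
  -- At the left endpoint `q = x`, so all `n + 1` trials are identical; at the right one `q = 0`.
  have hl : (interp (m + 1) (i + 1)).eval ((i + 1 : ℝ) / (m + 2))
      = (lower (m + 2) (i + 1)).eval ((i + 1 : ℝ) / (m + 2)) := by
    rw [lower_succ_left (m + 1), interp]
    simp only [Polynomial.eval_mul, Polynomial.eval_natCast, Polynomial.eval_X,
      Polynomial.eval_sub]
    congr 2
    push_cast
    field_simp
    ring
  have hr : (interp (m + 1) (i + 1)).eval ((i + 1 : ℝ) / (m + 1))
      = (lower (m + 1) (i + 1)).eval ((i + 1 : ℝ) / (m + 1)) := by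
    rw [interp]
    simp only [Polynomial.eval_mul, Polynomial.eval_natCast, Polynomial.eval_X,
      Polynomial.eval_sub]
    push_cast
    rw [mul_div_cancel₀ _ hm1.ne']
    ring
  simpa only [hl, hr] using h

lemma quarter_le_pow (i : ℕ) : (1 / 4 : ℝ) ≤ ((i + 1 : ℝ) / (i + 2)) ^ (i + 2) := by
  have h2 : (0 : ℝ) < i + 2 := by positivity
  -- Bernoulli's inequality with the real exponent `(i + 2) / 2 ≥ 1`; the result is then squared.
  have h := one_add_mul_self_le_rpow_one_add (s := -1 / (i + 2 : ℝ))
    (by rw [le_div_iff₀ h2]; linarith [(Nat.cast_nonneg i : (0 : ℝ) ≤ i)])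
    (p := (i + 2 : ℝ) / 2) (by linarith [(Nat.cast_nonneg i : (0 : ℝ) ≤ i)])
  have e1 : 1 + (i + 2 : ℝ) / 2 * (-1 / (i + 2)) = 1 / 2 := by
    field_simp
    norm_num
  have e2 : 1 + -1 / (i + 2 : ℝ) = (i + 1) / (i + 2) := by
    field_simp
    ring
  rw [e1, e2] at h
  have h0 : (0 : ℝ) ≤ (i + 1) / (i + 2) := by positivity
  calc (1 / 4 : ℝ) = (1 / 2) ^ 2 := by norm_num
    _ ≤ (((i + 1 : ℝ) / (i + 2)) ^ ((i + 2 : ℝ) / 2)) ^ 2 := by gcongr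
    _ = ((i + 1 : ℝ) / (i + 2)) ^ (i + 2) := by
      rw [← Real.rpow_natCast, ← Real.rpow_mul h0, ← Real.rpow_natCast]
      congr 1
      push_cast
      ring

lemma lower_le (i m : ℕ) (him : i < m) :
    (lower (m + 1) (i + 1)).eval ((i + 1 : ℝ) / (m + 1)) ≤ 3 / 4 := by
  induction m, him using Nat.le_induction with
  | base =>
    have hs := congrArg (Polynomial.eval ((i + 1 : ℝ) / (i + 2)))
      (bernsteinPolynomial.sum ℝ (i + 2))
    rw [sum_range_succ, Polynomial.eval_add, Polynomial.eval_one] at hs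
    have hb : (bernsteinPolynomial ℝ (i + 2) (i + 2)).eval ((i + 1 : ℝ) / (i + 2))
        = ((i + 1 : ℝ) / (i + 2)) ^ (i + 2) := by
      simp [bernsteinPolynomial]
    rw [hb] at hs
    have hq := quarter_le_pow i
    have hc : ((i + 1 : ℕ) : ℝ) + 1 = i + 2 := by push_cast; ring
    rw [Nat.succ_eq_add_one, hc, lower]
    linarith
  | succ m hm ih =>
    have hc : ((m + 1 : ℕ) : ℝ) + 1 = m + 2 := by push_cast; ring
    rw [hc]
    exact (lower_step hm).trans ih

/-- Let `2 ≤ t ≤ n` and `B ~ Binomial(n, (t-1)/n)`. Then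
`P[B ≥ t] ≥ 1/4`; the probability is written out against the binomial distribution. -/
theorem stmt_11 (n t : ℕ) (ht : 2 ≤ t) (htn : t ≤ n) :
    ∑ j ∈ Icc t n,
        (n.choose j : ℝ) * (((t : ℝ) - 1) / n) ^ j * (1 - ((t : ℝ) - 1) / n) ^ (n - j)
      ≥ 1 / 4 := by
  obtain ⟨i, rfl⟩ := Nat.exists_eq_add_of_le' ht
  obtain ⟨m, rfl⟩ := Nat.exists_eq_add_of_le' (show 1 ≤ n by omega)
  have hl := lower_le i m (by omega)
  have hx : (((i + 2 : ℕ) : ℝ) - 1) / ((m + 1 : ℕ) : ℝ) = (i + 1) / (m + 1) := by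
    push_cast
    ring
  rw [hx]
  have hs := congrArg (Polynomial.eval ((i + 1 : ℝ) / (m + 1))) (bernsteinPolynomial.sum ℝ (m + 1))
  rw [← sum_range_add_sum_Ico _ (show i + 2 ≤ m + 1 + 1 by omega), Polynomial.eval_add,
    Polynomial.eval_one, Polynomial.eval_finsetSum (Ico _ _)] at hs
  have he : ∑ j ∈ Icc (i + 2) (m + 1), ((m + 1).choose j : ℝ) * ((i + 1 : ℝ) / (m + 1)) ^ j
        * (1 - (i + 1 : ℝ) / (m + 1)) ^ (m + 1 - j)
      = ∑ j ∈ Ico (i + 2) (m + 1 + 1),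
        (bernsteinPolynomial ℝ (m + 1) j).eval ((i + 1 : ℝ) / (m + 1)) := by
    refine sum_congr (by ext; simp) fun j _ => ?_
    simp [bernsteinPolynomial]
  rw [he]
  rw [lower] at hl
  linarith
end

section
/- Let h : (0,∞) → ℝ be a positive differentiable function satisfying 1 + h'(v)/h(v)² ≥ 0 for all v > 0, and let u : (0,∞) → ℝ be a twice-differentiable function with u'(v) ≥ 0 and u''(v) ≤ 0 for all v > 0. Then the function v ↦ u(v) − u'(v)/h(v) is nondecreasing on (0,∞). -/
open Set

/-- Let `h` be a positive differentiable function on `(0,∞)` with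
`1 + h'(v)/h(v)² ≥ 0`, and `u` twice differentiable with `u' ≥ 0` and `u'' ≤ 0` on
`(0,∞)`. Then `v ↦ u v - u' v / h v` is nondecreasing on `(0,∞)`. -/
theorem stmt_14 (h h' : ℝ → ℝ)
    (hderiv : ∀ v > (0 : ℝ), HasDerivAt h (h' v) v)
    (hpos : ∀ v > (0 : ℝ), 0 < h v)
    (hreg : ∀ v > (0 : ℝ), 1 + h' v / (h v) ^ 2 ≥ 0)
    (u u' u'' : ℝ → ℝ)
    (huderiv : ∀ v > (0 : ℝ), HasDerivAt u (u' v) v)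
    (huderiv' : ∀ v > (0 : ℝ), HasDerivAt u' (u'' v) v)
    (humono : ∀ v > (0 : ℝ), 0 ≤ u' v)
    (huconc : ∀ v > (0 : ℝ), u'' v ≤ 0) :
    MonotoneOn (fun v => u v - u' v / h v) (Ioi 0) := by
  have hd : ∀ v > (0 : ℝ), HasDerivAt (fun v => u v - u' v / h v)
      (u' v - (u'' v * h v - u' v * h' v) / (h v) ^ 2) v := fun v hv =>
    (huderiv v hv).sub ((huderiv' v hv).div (hderiv v hv) (hpos v hv).ne')
  refine monotoneOn_of_hasDerivWithinAt_nonneg (convex_Ioi 0)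
    (fun v hv => (hd v hv).continuousAt.continuousWithinAt)
    (fun v hv => (hd v (interior_subset hv)).hasDerivWithinAt) (fun v hv => ?_)
  have hv0 : 0 < v := interior_subset hv
  have hh := hpos v hv0
  -- Both terms on the right are nonnegative: regularity with `u' ≥ 0`, and concavity with `h > 0`.
  have key : u' v - (u'' v * h v - u' v * h' v) / (h v) ^ 2
      = u' v * (1 + h' v / (h v) ^ 2) + (-u'' v) / h v := by
    field_simp
    ring
  rw [key]
  exact add_nonneg (mul_nonneg (humono v hv0) (hreg v hv0))
    (div_nonneg (neg_nonneg.2 (huconc v hv0)) hh.le)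
end

section
/- For every δ > 0 there exists a CDF F : ℝ → ℝ of a distribution supported on [0,∞) (F continuous and strictly increasing on its support, F(x)=0 for x ≤ 0, F(x) → 1 as x → ∞) that is regular, i.e., the revenue function R(q) = q·F⁻¹(1−q) is concave on (0,1] (with F⁻¹(y) = inf{v ≥ 0 : F(v) ≥ y}), together with a maximizer p* > 0 of p·(1−F(p)) with q* = 1−F(p*), such that 1 − F(p*·q*) ≤ 1/2 + δ. -/
/-!
In the limiting left-triangle distribution `1 - F v = 1 / (1 + v)`, the revenue curve is
`R q = 1 - q`, so the supremum `1` of the revenue is approached only as `q → 0`, and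
`1 - F 1 = 1/2`. To have the maximum attained at a finite price `a`, the tail beyond `a` is replaced
by the lighter tail `1 / (k v²)`, where `k = (1 + a) / a²` makes the two pieces meet at `a`:
`1 - F v = 1 / max (1 + v) (k v²)` for `v ≥ 0`.

Its revenue curve is `R q = min (1 - q) √(q / k)` (`mul_quantile_triangleCDF`), a minimum of two
concave functions, so `F` is regular. In terms of the price, the revenue is `p / (1 + p)` up to `a`
and `1 / (k p)` afterwards, so it is maximal at `p* = a`. There `q* = 1 / (1 + a)`, hence
`1 - F (p* q*) ≤ 1 / (1 + a / (1 + a)) = (1 + a) / (1 + 2 a)`, which tends to `1/2` as `a → ∞`;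
`a = 1 / δ` is large enough.
-/

open Set

/-- The reciprocal of the survival function `1 - F` of the smoothed left-triangle distribution, on
`[0,∞)`. -/
noncomputable def invSurvival (k v : ℝ) : ℝ := max (1 + v) (k * v ^ 2)

/-- The CDF of the smoothed left-triangle distribution with tail parameter `k`. Replacing `v` by
`max v 0` extends it by `0` to negative arguments. -/
noncomputable def triangleCDF (k v : ℝ) : ℝ := 1 - (invSurvival k (max v 0))⁻¹

lemma triangleCDF_of_nonneg (k : ℝ) {v : ℝ} (hv : 0 ≤ v) :
    triangleCDF k v = 1 - (invSurvival k v)⁻¹ := by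
  rw [triangleCDF, max_eq_left hv]

lemma invSurvival_pos (k : ℝ) {v : ℝ} (hv : 0 ≤ v) : 0 < invSurvival k v :=
  lt_max_of_lt_left (by linarith)

lemma isCDFOnNonneg_triangleCDF {k : ℝ} (hk : 0 < k) : IsCDFOnNonneg (triangleCDF k) where
  cont := by
    have h : Continuous fun v : ℝ => invSurvival k (max v 0) := by
      unfold invSurvival; fun_prop
    exact continuous_const.sub (h.inv₀ fun v => (invSurvival_pos k (le_max_right v 0)).ne')
  strictMono := by
    intro x hx y hy hxy
    rw [mem_Ici] at hx hy
    rw [triangleCDF_of_nonneg k hx, triangleCDF_of_nonneg k hy]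
    have h : invSurvival k x < invSurvival k y :=
      max_lt_max (by linarith) (by gcongr)
    have := inv_strictAnti₀ (invSurvival_pos k hx) h
    linarith
  zero_of_nonpos := by
    intro x hx
    simp [triangleCDF, invSurvival, max_eq_right hx]
  tendsto_one := by
    have h : Filter.Tendsto (fun v : ℝ => invSurvival k (max v 0)) Filter.atTop Filter.atTop := by
      refine Filter.tendsto_atTop_mono (fun v => ?_) Filter.tendsto_id
      have h₁ : v ≤ max v 0 := le_max_left _ _
      have h₂ : 1 + max v 0 ≤ invSurvival k (max v 0) := le_max_left _ _
      simp only [id]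
      linarith
    have h₁ := h.inv_tendsto_atTop.const_sub 1
    rw [sub_zero] at h₁
    exact h₁

/-- The revenue curve of the smoothed left-triangle distribution. -/
lemma mul_quantile_triangleCDF {k : ℝ} (hk : 0 < k) {q : ℝ} (hq : q ∈ Ioc (0 : ℝ) 1) :
    q * quantile (triangleCDF k) (1 - q) = min (1 - q) √(q / k) := by
  obtain ⟨hq0, hq1⟩ := hq
  have hnonneg : 0 ≤ min (1 - q) √(q / k) := le_min (by linarith) (Real.sqrt_nonneg _)
  have hset : {v : ℝ | 0 ≤ v ∧ 1 - q ≤ triangleCDF k v} = Ici (min (1 - q) √(q / k) / q) := by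
    ext v
    rw [mem_ofPred_eq, mem_Ici]
    -- For `v ≥ 0`, both membership conditions say `1 / q ≤ 1 + v` or `1 / q ≤ k v²`.
    have key : 0 ≤ v →
        (1 - q ≤ triangleCDF k v ↔ min (1 - q) √(q / k) / q ≤ v) := by
      intro hv
      rw [triangleCDF_of_nonneg k hv, sub_le_sub_iff_left,
        inv_le_comm₀ (invSurvival_pos k hv) hq0, invSurvival, le_max_iff, div_le_iff₀ hq0,
        min_le_iff, Real.sqrt_le_left (by positivity), div_le_iff₀ hk,
        inv_le_iff_one_le_mul₀ hq0, inv_le_iff_one_le_mul₀ hq0]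
      refine or_congr ⟨fun h => by linarith, fun h => by linarith⟩ ?_
      rw [show (v * q) ^ 2 * k = q * (k * v ^ 2 * q) by ring]
      exact (le_mul_iff_one_le_right hq0).symm
    constructor
    · rintro ⟨hv, h⟩
      exact (key hv).1 h
    · intro h
      have hv : 0 ≤ v := (div_nonneg hnonneg hq0.le).trans h
      exact ⟨hv, (key hv).2 h⟩
  rw [quantile, hset, csInf_Ici, mul_div_cancel₀ _ hq0.ne']

lemma isRegularCDF_triangleCDF {k : ℝ} (hk : 0 < k) : IsRegularCDF (triangleCDF k) := by
  have h₁ : ConcaveOn ℝ (Ioc (0 : ℝ) 1) fun q => 1 - q :=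
    (concaveOn_const 1 (convex_Ioc 0 1)).sub (convexOn_id (convex_Ioc 0 1))
  have h₂ : ConcaveOn ℝ (Ioc (0 : ℝ) 1) fun q => √(q / k) := by
    have h := (Real.strictConcaveOn_sqrt.concaveOn.subset
      (fun q hq => hq.1.le) (convex_Ioc (0 : ℝ) 1)).smul (inv_nonneg.2 (Real.sqrt_nonneg k))
    refine h.congr fun q hq => ?_
    simp only [smul_eq_mul]
    rw [Real.sqrt_div hq.1.le, div_eq_inv_mul]
  exact (h₁.inf h₂).congr fun q hq => (mul_quantile_triangleCDF hk hq).symm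

/-- The two pieces of the distribution meet at `a` when `k = (1 + a) / a²`. -/
lemma invSurvival_join {a : ℝ} (ha : 0 < a) : invSurvival ((1 + a) / a ^ 2) a = 1 + a := by
  rw [invSurvival, div_mul_cancel₀ _ (by positivity), max_self]

lemma revenue_le {a : ℝ} (ha : 0 < a) {p : ℝ} (hp : 0 ≤ p) :
    p * (invSurvival ((1 + a) / a ^ 2) p)⁻¹ ≤ a * (1 + a)⁻¹ := by
  rw [← div_eq_mul_inv, ← div_eq_mul_inv,
    div_le_div_iff₀ (invSurvival_pos _ hp) (by linarith)]
  rcases le_total p a with h | h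
  · have : 1 + p ≤ invSurvival ((1 + a) / a ^ 2) p := le_max_left _ _
    nlinarith
  · have h₁ : (1 + a) / a ^ 2 * p ^ 2 ≤ invSurvival ((1 + a) / a ^ 2) p := le_max_right _ _
    calc p * (1 + a) = (1 + a) / a * p * a := by field_simp
      _ ≤ (1 + a) / a * p * p := by gcongr
      _ = a * ((1 + a) / a ^ 2 * p ^ 2) := by field_simp
      _ ≤ a * invSurvival ((1 + a) / a ^ 2) p := by gcongr

/-- for every `δ > 0` there is a regular CDF `F` on `[0,∞)` together
with a maximizer `p* > 0` of `p·(1 - F p)` such that, with `q* = 1 - F p*`,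
`1 - F (p*·q*) ≤ 1/2 + δ`. -/
theorem stmt_18 (δ : ℝ) (hδ : 0 < δ) :
    ∃ (F : ℝ → ℝ) (pstar : ℝ),
      IsCDFOnNonneg F ∧ IsRegularCDF F ∧ 0 < pstar ∧
      (∀ p : ℝ, 0 ≤ p → p * (1 - F p) ≤ pstar * (1 - F pstar)) ∧
      1 - F (pstar * (1 - F pstar)) ≤ 1 / 2 + δ := by
  obtain ⟨a, ha, haδ⟩ : ∃ a : ℝ, 0 < a ∧ a * δ = 1 :=
    ⟨1 / δ, by positivity, by field_simp⟩
  have hk : 0 < (1 + a) / a ^ 2 := by positivity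
  have hq : 1 - triangleCDF ((1 + a) / a ^ 2) a = (1 + a)⁻¹ := by
    rw [triangleCDF_of_nonneg _ ha.le, invSurvival_join ha, sub_sub_cancel]
  refine ⟨triangleCDF ((1 + a) / a ^ 2), a, isCDFOnNonneg_triangleCDF hk,
    isRegularCDF_triangleCDF hk, ha, fun p hp => ?_, ?_⟩
  · rw [hq, triangleCDF_of_nonneg _ hp, sub_sub_cancel]
    exact revenue_le ha hp
  · have hx : 0 ≤ a * (1 + a)⁻¹ := by positivity
    rw [hq, triangleCDF_of_nonneg _ hx, sub_sub_cancel]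
    calc (invSurvival ((1 + a) / a ^ 2) (a * (1 + a)⁻¹))⁻¹ ≤ (1 + a * (1 + a)⁻¹)⁻¹ :=
          inv_anti₀ (by positivity) (le_max_left _ _)
      _ = (1 + a) / (1 + 2 * a) := by field_simp; ring
      _ ≤ 1 / 2 + δ := by
          rw [div_le_iff₀ (by positivity)]
          nlinarith
end

section
/- Let F : ℝ → ℝ be the CDF of a distribution supported on [0,∞): F is continuous and strictly increasing on its support, F(x) = 0 for x ≤ 0, and F(x) → 1 as x → ∞. Suppose F is regular, i.e., the revenue function R(q) = q·F⁻¹(1−q) is concave on (0,1], where F⁻¹(y) = inf{v ≥ 0 : F(v) ≥ y}. Let p* > 0 be a maximizer of p·(1−F(p)) over p ≥ 0 with p*(1−F(p*)) > 0, and let q* = 1−F(p*). Then for every p ∈ [p*·q*, p*]: p·(1−F(p)) ≥ (1/2)·p*·q*. -/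
/-!
Write `q = 1 - F p` and `r = p* q*`. Two lower bounds on the revenue `p q` are added.
Since `p ≥ r`, `p q ≥ r q`. Since `q* ≤ q ≤ 1` and the revenue function satisfies `R q = p q`,
`R q* = r` and `R 1 = 0`, concavity gives `p q ≥ r (1 - q) / (1 - q*) ≥ r (1 - q)`.
The sum is `2 p q ≥ r`.
-/

open Set

lemma quantile_apply_s19 {F : ℝ → ℝ} (hF : StrictMonoOn F (Ici 0)) {p : ℝ} (hp : 0 ≤ p) :
    quantile F (F p) = p := by
  have hset : {v : ℝ | 0 ≤ v ∧ F p ≤ F v} = Ici p := by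
    ext v
    constructor
    · rintro ⟨hv, h⟩
      exact (hF.le_iff_le hp hv).1 h
    · intro h
      have hv : 0 ≤ v := le_trans hp h
      exact ⟨hv, (hF.le_iff_le hp hv).2 h⟩
  rw [quantile, hset, csInf_Ici]

/-- with `p*` the monopoly price and `q* = 1 - F p*`, every price
`p ∈ [p*·q*, p*]` earns expected revenue `p·(1 - F p) ≥ (1/2)·p*·q*`. -/
theorem stmt_19 (F : ℝ → ℝ) (hF : IsCDFOnNonneg F) (hreg : IsRegularCDF F)
    (pstar : ℝ) (hpstar : 0 < pstar)
    (hmax : ∀ p : ℝ, 0 ≤ p → p * (1 - F p) ≤ pstar * (1 - F pstar))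
    (hpos : 0 < pstar * (1 - F pstar)) (qstar : ℝ) (hq : qstar = 1 - F pstar) :
    ∀ p ∈ Icc (pstar * qstar) pstar, p * (1 - F p) ≥ (1 / 2) * (pstar * qstar) := by
  rintro p ⟨hlo, hhi⟩
  subst hq
  have hp : 0 < p := hpos.trans_le hlo
  have hF0 : F 0 = 0 := hF.zero_of_nonpos 0 le_rfl
  have hFp : 0 < F p := hF0 ▸ hF.strictMono (mem_Ici.2 le_rfl) hp.le hp
  have hFle : F p ≤ F pstar := (hF.strictMono.le_iff_le hp.le hpstar.le).2 hhi
  have hFs : 0 < F pstar := hFp.trans_le hFle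
  have hFs1 : 0 < 1 - F pstar := pos_of_mul_pos_right hpos hpstar.le
  -- `1 - F p` is the convex combination of `q*` and `1` with weight `F p / F p*` on `q*`.
  have hqs : 1 - F pstar ∈ Ioc (0 : ℝ) 1 := ⟨hFs1, by linarith⟩
  have hone : (1 : ℝ) ∈ Ioc (0 : ℝ) 1 := ⟨one_pos, le_rfl⟩
  have ha : 0 ≤ F p / F pstar := by positivity
  have hb : 0 ≤ 1 - F p / F pstar := sub_nonneg.2 ((div_le_one hFs).2 hFle)
  have hconc := And.right hreg hqs hone ha hb (add_sub_cancel _ _)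
  have hcomb : F p / F pstar * (1 - F pstar) + (1 - F p / F pstar) * 1 = 1 - F p := by
    field_simp
    ring
  have hR1 : quantile F 0 = 0 := by
    simpa only [hF0] using quantile_apply_s19 hF.strictMono (le_refl (0 : ℝ))
  simp only [smul_eq_mul, hcomb, sub_sub_cancel, sub_self, hR1,
    quantile_apply_s19 hF.strictMono hp.le, quantile_apply_s19 hF.strictMono hpstar.le, mul_zero,
    add_zero] at hconc
  have hweight : F p ≤ F p / F pstar := le_div_self hFp.le hFs (by linarith)
  have h1 := mul_le_mul_of_nonneg_right hweight hpos.le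
  have h2 := mul_le_mul_of_nonneg_right hlo (by linarith : 0 ≤ 1 - F p)
  linarith
end
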